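/- arXiv:0711.4457 — 2 statements merged into one kernel-verified Lean document; each statement's English description precedes it below -/
import Mathlib

section
/- Let α ∈ (0,2), let (S, μ) and (S̃, μ̃) be σ-finite measure spaces, and let f, g ∈ L^α(S, μ) and f̃, g̃ ∈ L^α(S̃, μ̃). If ∫_S |u f(s) + v g(s)|^α μ(ds) = ∫_{S̃} |u f̃(s̃) + v g̃(s̃)|^α μ̃(ds̃) for all u, v ∈ ℝ, then [f,g]₂ = [f̃,g̃]₂; if moreover α ∈ (1,2), then also [f,g]₁* = [f̃,g̃]₁* and [f,g]₁ = [f̃,g̃]₁. (Paper's Proposition 2.1: the dependence measures do not depend on the spectral representation of a jointly SαS pair.) -/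
open MeasureTheory Real Set Filter
open scoped ENNReal Topology

noncomputable def nrm (α : ℝ) {S : Type*} [MeasurableSpace S] (μ : Measure S) (f : S → ℝ) : ℝ :=
  (∫ s, |f s| ^ α ∂μ) ^ (1 / α)

noncomputable def dep2 (α : ℝ) {S : Type*} [MeasurableSpace S] (μ : Measure S) (f g : S → ℝ) : ℝ :=
  ∫ s, |f s * g s| ^ (α / 2) ∂μ

noncomputable def dep1s (α : ℝ) {S : Type*} [MeasurableSpace S] (μ : Measure S) (f g : S → ℝ) : ℝ :=
  ∫ s, |f s| ^ (α - 1) * |g s| ∂μ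

noncomputable def dep1 (α : ℝ) {S : Type*} [MeasurableSpace S] (μ : Measure S) (f g : S → ℝ) : ℝ :=
  dep1s α μ f g + dep1s α μ g f

/-- `f ∈ L^α(S, μ)`. -/
def MemLalpha (α : ℝ) {S : Type*} [MeasurableSpace S] (μ : Measure S) (f : S → ℝ) : Prop :=
  AEStronglyMeasurable f μ ∧ Integrable (fun s => |f s| ^ α) μ

/-- Assumption (A1) with constant ε₁. -/
def A1 (α ε₁ : ℝ) {S : Type*} [MeasurableSpace S] (μ : Measure S) (f g : S → ℝ) : Prop :=
  nrm α μ f ^ (α / 2) * nrm α μ g ^ (α / 2) - dep2 α μ f g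
    ≥ ε₁ * (nrm α μ f ^ (α / 2) * nrm α μ g ^ (α / 2))

/-- Assumption (A2) with constant ε₂. -/
def A2 (α ε₂ : ℝ) {S : Type*} [MeasurableSpace S] (μ : Measure S) (f g : S → ℝ) : Prop :=
  ∀ u v : ℝ, nrm α μ (fun s => u * f s + v * g s) ^ α
    ≥ ε₂ * (|u| ^ α * nrm α μ f ^ α + |v| ^ α * nrm α μ g ^ α)

noncomputable def Ufun (α : ℝ) {S : Type*} [MeasurableSpace S] (μ : Measure S)
    (f g : S → ℝ) (u v : ℝ) : ℝ :=
  Real.exp (-(nrm α μ (fun s => u * f s + v * g s) ^ α)) -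
    Real.exp (-(nrm α μ (fun s => u * f s) ^ α) - nrm α μ (fun s => v * g s) ^ α)

/-- signed power `a^⟨p⟩ = sign(a)|a|^p`. -/
noncomputable def spow (a p : ℝ) : ℝ := Real.sign a * |a| ^ p

noncomputable def D1 (α : ℝ) {S : Type*} [MeasurableSpace S] (μ : Measure S)
    (f g : S → ℝ) (u v : ℝ) : ℝ :=
  -α * (∫ s, spow (u * f s + v * g s) (α - 1) * f s ∂μ) *
      Real.exp (-(nrm α μ (fun s => u * f s + v * g s) ^ α)) +
    α * (∫ s, spow (u * f s) (α - 1) * f s ∂μ) *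
      Real.exp (-(nrm α μ (fun s => u * f s) ^ α) - nrm α μ (fun s => v * g s) ^ α)

noncomputable def D2 (α : ℝ) {S : Type*} [MeasurableSpace S] (μ : Measure S)
    (f g : S → ℝ) (u v : ℝ) : ℝ :=
  -(α * (α - 1)) * (∫ s, (if f s = 0 ∨ g s = 0 then (0:ℝ) else
        |u * f s + v * g s| ^ (α - 2) * (f s * g s)) ∂μ) *
      Real.exp (-(nrm α μ (fun s => u * f s + v * g s) ^ α)) +
    α ^ 2 * (∫ s, spow (u * f s + v * g s) (α - 1) * f s ∂μ) *
      (∫ s, spow (u * f s + v * g s) (α - 1) * g s ∂μ) *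
      Real.exp (-(nrm α μ (fun s => u * f s + v * g s) ^ α)) -
    α ^ 2 * (∫ s, spow (u * f s) (α - 1) * f s ∂μ) *
      (∫ s, spow (v * g s) (α - 1) * g s ∂μ) *
      Real.exp (-(nrm α μ (fun s => u * f s) ^ α) - nrm α μ (fun s => v * g s) ^ α)

/-- `(ξ, η)` is jointly SαS with spectral pair `(f, g)`. -/
def JointSAS (α : ℝ) {S : Type*} [MeasurableSpace S] (μ : Measure S) (f g : S → ℝ)
    {Ω : Type*} [MeasurableSpace Ω] (P : Measure Ω) (ξ η : Ω → ℝ) : Prop :=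
  ∀ u v : ℝ, (∫ ω, Complex.exp (Complex.I * ((u * ξ ω + v * η ω : ℝ) : ℂ)) ∂P)
    = Complex.exp (-((nrm α μ (fun s => u * f s + v * g s) ^ α : ℝ) : ℂ))

/-!
The *Clarkson defect* `D(x, y) = 2|x|^p + 2|y|^p - |x + y|^p - |x - y|^p` is positive for
`0 < p < 2` and `x, y ≠ 0`, because `r ↦ r^(p/2)` is strictly concave and subadditive. It is
homogeneous of degree `p` and even in each variable, so its Mellin transform in the ratio of the
variables factors: `∫₀^∞ t^(-q-1) D(x, t y) dt = C |x|^(p-q) |y|^q` with `0 < C < ∞` for every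
`0 < q < p`. By Fubini, `C ∫ |f|^(p-q) |g|^q dμ = ∫₀^∞ t^(-q-1) (∫ D(f, t g) dμ) dt`, and the
right-hand side only involves the integrals of `|u f + v g|^p`. The exponents `q = p/2` and `q = 1`
give the two dependence measures.
-/

lemma sq_rpow_half (p x : ℝ) : (x ^ 2) ^ (p / 2) = |x| ^ p := by
  rw [← sq_abs, ← rpow_natCast, ← rpow_mul (abs_nonneg x), Nat.cast_ofNat,
    mul_div_cancel₀ p two_ne_zero]

lemma rpow_mul_rpow_le_rpow_add_add_rpow_add {a b r s : ℝ} (ha : 0 ≤ a) (hb : 0 ≤ b)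
    (hr : 0 ≤ r) (hs : 0 ≤ s) : a ^ r * b ^ s ≤ a ^ (r + s) + b ^ (r + s) := by
  rcases le_total a b with hab | hba
  · calc a ^ r * b ^ s ≤ b ^ r * b ^ s := by gcongr
      _ = b ^ (r + s) := (rpow_add_of_nonneg hb hr hs).symm
      _ ≤ a ^ (r + s) + b ^ (r + s) := le_add_of_nonneg_left (by positivity)
  · calc a ^ r * b ^ s ≤ a ^ r * a ^ s := by gcongr
      _ = a ^ (r + s) := (rpow_add_of_nonneg ha hr hs).symm
      _ ≤ a ^ (r + s) + b ^ (r + s) := le_add_of_nonneg_right (by positivity)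

/-- The defect in Clarkson's inequality `|x + y|^p + |x - y|^p ≤ 2|x|^p + 2|y|^p`, `0 < p ≤ 2`.
Integrated along `(f, t g)`, it is a combination of the integrals of `|u f + v g|^p`. -/
noncomputable def clarksonDefect (p x y : ℝ) : ℝ :=
  2 * |x| ^ p + 2 * |y| ^ p - |x + y| ^ p - |x - y| ^ p

section ClarksonDefect

variable {p : ℝ}

lemma measurable_clarksonDefect (p : ℝ) :
    Measurable fun w : ℝ × ℝ => clarksonDefect p w.1 w.2 := by
  unfold clarksonDefect; fun_prop

lemma clarksonDefect_comm (p x y : ℝ) : clarksonDefect p x y = clarksonDefect p y x := by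
  simp only [clarksonDefect, add_comm x y, abs_sub_comm x y]; ring

lemma clarksonDefect_zero_left (hp : p ≠ 0) (y : ℝ) : clarksonDefect p 0 y = 0 := by
  simp only [clarksonDefect, abs_zero, zero_rpow hp, zero_add, zero_sub, abs_neg]; ring

lemma clarksonDefect_zero_right (hp : p ≠ 0) (x : ℝ) : clarksonDefect p x 0 = 0 := by
  rw [clarksonDefect_comm, clarksonDefect_zero_left hp]

lemma clarksonDefect_abs_right (p x y : ℝ) : clarksonDefect p x |y| = clarksonDefect p x y := by
  rcases abs_choice y with h | h <;> rw [h]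
  simp only [clarksonDefect, abs_neg, sub_neg_eq_add, ← sub_eq_add_neg]; ring

lemma clarksonDefect_mul_mul (p c x y : ℝ) :
    clarksonDefect p (c * x) (c * y) = |c| ^ p * clarksonDefect p x y := by
  simp only [clarksonDefect, ← mul_add, ← mul_sub, abs_mul, mul_rpow (abs_nonneg _) (abs_nonneg _)]
  ring

lemma clarksonDefect_eq_abs_rpow_mul {x : ℝ} (hx : x ≠ 0) (p y : ℝ) :
    clarksonDefect p x y = |x| ^ p * clarksonDefect p 1 |y / x| := by
  rw [clarksonDefect_abs_right, ← clarksonDefect_mul_mul, mul_one, mul_div_cancel₀ y hx]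

lemma clarksonDefect_pos (hp₀ : 0 < p) (hp₂ : p < 2) {x y : ℝ} (hx : x ≠ 0) (hy : y ≠ 0) :
    0 < clarksonDefect p x y := by
  have hne : (x + y) ^ 2 ≠ (x - y) ^ 2 := fun h => mul_ne_zero hx hy (by linarith)
  have concavity := (strictConcaveOn_rpow (p := p / 2) (by linarith) (by linarith)).2
    (mem_Ici.2 (sq_nonneg (x + y))) (mem_Ici.2 (sq_nonneg (x - y))) hne
    one_half_pos one_half_pos (add_halves 1)
  have parallelogram : 1 / 2 * (x + y) ^ 2 + 1 / 2 * (x - y) ^ 2 = x ^ 2 + y ^ 2 := by ring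
  have subadditivity := rpow_add_le_add_rpow (p := p / 2) (sq_nonneg x) (sq_nonneg y)
    (by linarith) (by linarith)
  simp only [smul_eq_mul, parallelogram, sq_rpow_half] at concavity subadditivity
  unfold clarksonDefect
  linarith

lemma clarksonDefect_nonneg (hp₀ : 0 < p) (hp₂ : p < 2) (x y : ℝ) : 0 ≤ clarksonDefect p x y := by
  rcases eq_or_ne x 0 with rfl | hx
  · rw [clarksonDefect_zero_left hp₀.ne']
  rcases eq_or_ne y 0 with rfl | hy
  · rw [clarksonDefect_zero_right hp₀.ne']
  exact (clarksonDefect_pos hp₀ hp₂ hx hy).le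

lemma two_mul_abs_rpow_le (hp : 0 ≤ p) (x y : ℝ) :
    2 * |x| ^ p ≤ |x + y| ^ p + |x - y| ^ p + 2 * |y| ^ p := by
  rcases le_total 1 p with h1 | h1
  · have mean_le : |x| ≤ 1 / 2 * |x + y| + 1 / 2 * |x - y| := by
      have := abs_add_le (x + y) (x - y)
      rw [show x + y + (x - y) = 2 * x by ring, abs_mul, abs_two] at this
      linarith
    have convexity : |x| ^ p ≤ 1 / 2 * |x + y| ^ p + 1 / 2 * |x - y| ^ p :=
      (rpow_le_rpow (abs_nonneg x) mean_le hp).trans <|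
        (convexOn_rpow h1).2 (mem_Ici.2 (abs_nonneg (x + y))) (mem_Ici.2 (abs_nonneg (x - y)))
          one_half_pos.le one_half_pos.le (add_halves 1)
    linarith [rpow_nonneg (abs_nonneg y) p]
  · have subadditivity (a b : ℝ) : |a + b| ^ p ≤ |a| ^ p + |b| ^ p :=
      (rpow_le_rpow (abs_nonneg _) (abs_add_le a b) hp).trans <|
        rpow_add_le_add_rpow (abs_nonneg a) (abs_nonneg b) hp h1
    have hadd := subadditivity (x + y) (-y)
    have hsub := subadditivity (x - y) y
    rw [add_neg_cancel_right, abs_neg] at hadd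
    rw [sub_add_cancel] at hsub
    linarith

lemma clarksonDefect_le_right (hp : 0 ≤ p) (x y : ℝ) : clarksonDefect p x y ≤ 4 * |y| ^ p := by
  have h := two_mul_abs_rpow_le hp x y
  unfold clarksonDefect
  linarith

lemma clarksonDefect_le_left (hp : 0 ≤ p) (x y : ℝ) : clarksonDefect p x y ≤ 4 * |x| ^ p :=
  clarksonDefect_comm p x y ▸ clarksonDefect_le_right hp y x

end ClarksonDefect

/-- The value at `-q` of the Mellin transform of `t ↦ clarksonDefect p 1 t`: the constant relating
`∫ |f|^(p-q) |g|^q` to the Clarkson defects of the pairs `(f, t g)`. -/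
noncomputable def clarksonMellin (p q : ℝ) : ℝ :=
  ∫ t in Ioi 0, t ^ (-q - 1) * clarksonDefect p 1 t

section ClarksonMellin

variable {p q : ℝ}

lemma integrableOn_rpow_mul_clarksonDefect (hp : p < 2) (hq : 0 < q) (hqp : q < p) (x y : ℝ) :
    IntegrableOn (fun t => t ^ (-q - 1) * clarksonDefect p x (t * y)) (Ioi 0) := by
  have hp₀ : 0 < p := hq.trans hqp
  have hmeas : Measurable fun t => t ^ (-q - 1) * clarksonDefect p x (t * y) := by
    unfold clarksonDefect; fun_prop
  have hnorm {t : ℝ} (ht : 0 < t) : ‖t ^ (-q - 1) * clarksonDefect p x (t * y)‖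
      = t ^ (-q - 1) * clarksonDefect p x (t * y) :=
    norm_of_nonneg (mul_nonneg (by positivity) (clarksonDefect_nonneg hp₀ hp _ _))
  rw [← Ioc_union_Ioi_eq_Ioi (zero_le_one' ℝ)]
  refine IntegrableOn.union ?_ ?_
  · have hbound : IntegrableOn (fun t : ℝ => t ^ (-q - 1 + p) * (4 * |y| ^ p)) (Ioc 0 1) :=
      (intervalIntegral.intervalIntegrable_rpow' (by linarith)).1.mul_const _
    refine hbound.mono' hmeas.aestronglyMeasurable ?_
    filter_upwards [ae_restrict_mem measurableSet_Ioc] with t ht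
    calc ‖t ^ (-q - 1) * clarksonDefect p x (t * y)‖
        = t ^ (-q - 1) * clarksonDefect p x (t * y) := hnorm ht.1
      _ ≤ t ^ (-q - 1) * (4 * |t * y| ^ p) :=
        mul_le_mul_of_nonneg_left (clarksonDefect_le_right hp₀.le _ _) (rpow_nonneg ht.1.le _)
      _ = t ^ (-q - 1 + p) * (4 * |y| ^ p) := by
        rw [abs_mul, abs_of_pos ht.1, mul_rpow ht.1.le (abs_nonneg y), rpow_add ht.1]; ring
  · have hbound : IntegrableOn (fun t : ℝ => t ^ (-q - 1) * (4 * |x| ^ p)) (Ioi 1) :=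
      (integrableOn_Ioi_rpow_of_lt (by linarith) one_pos).mul_const _
    refine hbound.mono' hmeas.aestronglyMeasurable ?_
    filter_upwards [ae_restrict_mem measurableSet_Ioi] with t ht
    have ht₀ : 0 < t := one_pos.trans ht
    exact (hnorm ht₀).trans_le <|
      mul_le_mul_of_nonneg_left (clarksonDefect_le_left hp₀.le _ _) (rpow_nonneg ht₀.le _)

lemma clarksonMellin_pos (hp : p < 2) (hq : 0 < q) (hqp : q < p) : 0 < clarksonMellin p q := by
  have hpos {t : ℝ} (ht : 0 < t) : 0 < t ^ (-q - 1) * clarksonDefect p 1 t :=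
    mul_pos (rpow_pos_of_pos ht _) (clarksonDefect_pos (hq.trans hqp) hp one_ne_zero ht.ne')
  have hint := integrableOn_rpow_mul_clarksonDefect hp hq hqp 1 1
  simp only [mul_one] at hint
  refine (setIntegral_pos_iff_support_of_nonneg_ae ?_ hint).2 ?_
  · filter_upwards [ae_restrict_mem measurableSet_Ioi] with t ht using (hpos ht).le
  · have hsupport : Ioi (0 : ℝ) ⊆
        Function.support fun t => t ^ (-q - 1) * clarksonDefect p 1 t :=
      fun t ht => (hpos ht).ne'
    rw [inter_eq_right.2 hsupport, volume_Ioi]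
    exact ENNReal.zero_lt_top

lemma integral_Ioi_rpow_mul_comp_mul_left {c : ℝ} (hc : 0 < c) (q : ℝ) (f : ℝ → ℝ) :
    ∫ t in Ioi 0, t ^ (-q - 1) * f (c * t) = c ^ q * ∫ t in Ioi 0, t ^ (-q - 1) * f t := by
  have hscale : ∀ t ∈ Ioi (0 : ℝ),
      t ^ (-q - 1) * f (c * t) = c ^ (q + 1) * ((c * t) ^ (-q - 1) * f (c * t)) := by
    intro t ht
    have hcancel : c ^ (q + 1) * c ^ (-q - 1) = 1 := by
      rw [← rpow_add hc, show q + 1 + (-q - 1) = 0 by ring, rpow_zero]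
    rw [mul_rpow hc.le (le_of_lt ht), ← mul_assoc, ← mul_assoc, hcancel, one_mul]
  rw [setIntegral_congr_fun measurableSet_Ioi hscale, integral_const_mul,
    integral_comp_mul_left_Ioi (fun t => t ^ (-q - 1) * f t) 0 hc, mul_zero, smul_eq_mul,
    ← mul_assoc, rpow_add_one hc.ne', mul_inv_cancel_right₀ hc.ne']

lemma integral_rpow_mul_clarksonDefect (hq : 0 < q) (hqp : q < p) (x y : ℝ) :
    ∫ t in Ioi 0, t ^ (-q - 1) * clarksonDefect p x (t * y)
      = clarksonMellin p q * (|x| ^ (p - q) * |y| ^ q) := by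
  have hp : p ≠ 0 := (hq.trans hqp).ne'
  rcases eq_or_ne x 0 with rfl | hx
  · simp [clarksonDefect_zero_left hp, zero_rpow (sub_pos.2 hqp).ne']
  rcases eq_or_ne y 0 with rfl | hy
  · simp [clarksonDefect_zero_right hp, zero_rpow hq.ne']
  have hratio : 0 < |y / x| := abs_pos.2 (div_ne_zero hy hx)
  have hhom : ∀ t ∈ Ioi (0 : ℝ), t ^ (-q - 1) * clarksonDefect p x (t * y)
      = |x| ^ p * (t ^ (-q - 1) * clarksonDefect p 1 (|y / x| * t)) := by
    intro t ht
    rw [clarksonDefect_eq_abs_rpow_mul hx, mul_div_assoc, abs_mul, abs_of_pos (mem_Ioi.1 ht),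
      mul_comm t]
    ring
  rw [setIntegral_congr_fun measurableSet_Ioi hhom, integral_const_mul,
    integral_Ioi_rpow_mul_comp_mul_left hratio, ← clarksonMellin, abs_div,
    div_rpow (abs_nonneg y) (abs_nonneg x), rpow_sub (abs_pos.2 hx)]
  ring

end ClarksonMellin

section DependenceIntegrals

variable {S S' : Type*} [MeasurableSpace S] [MeasurableSpace S'] {μ : Measure S} {μ' : Measure S'}
  {p q : ℝ} {f g : S → ℝ} {f' g' : S' → ℝ}

lemma memLalpha_iff_memLp (hp : 0 < p) : MemLalpha p μ f ↔ MemLp f (ENNReal.ofReal p) μ := by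
  have hint (hf : AEStronglyMeasurable f μ) :
      Integrable (fun s => |f s| ^ p) μ ↔ MemLp f (ENNReal.ofReal p) μ := by
    simpa only [ENNReal.toReal_ofReal hp.le, norm_eq_abs] using
      integrable_norm_rpow_iff hf (ENNReal.ofReal_pos.2 hp).ne' ENNReal.ofReal_ne_top
  exact ⟨fun h => (hint h.1).1 h.2, fun h => ⟨h.1, (hint h.1).2 h⟩⟩

lemma integrable_abs_rpow (hp : 0 < p) (hf : MemLp f (ENNReal.ofReal p) μ) :
    Integrable (fun s => |f s| ^ p) μ :=
  ((memLalpha_iff_memLp hp).2 hf).2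

lemma integrable_abs_rpow_mul_abs_rpow (hq : 0 < q) (hqp : q < p)
    (hf : MemLp f (ENNReal.ofReal p) μ) (hg : MemLp g (ENNReal.ofReal p) μ) :
    Integrable (fun s => |f s| ^ (p - q) * |g s| ^ q) μ := by
  have hp : 0 < p := hq.trans hqp
  have hmeas : AEMeasurable (fun s => |f s| ^ (p - q) * |g s| ^ q) μ :=
    (hf.1.aemeasurable.abs.pow_const _).mul (hg.1.aemeasurable.abs.pow_const _)
  refine ((integrable_abs_rpow hp hf).add (integrable_abs_rpow hp hg)).mono'
    hmeas.aestronglyMeasurable (.of_forall fun s => ?_)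
  have h := rpow_mul_rpow_le_rpow_add_add_rpow_add (abs_nonneg (f s)) (abs_nonneg (g s))
    (sub_pos.2 hqp).le hq.le
  rw [sub_add_cancel] at h
  rwa [norm_of_nonneg (by positivity)]

lemma integral_clarksonDefect (hp : 0 < p) (hf : MemLp f (ENNReal.ofReal p) μ)
    (hg : MemLp g (ENNReal.ofReal p) μ) :
    ∫ s, clarksonDefect p (f s) (g s) ∂μ = 2 * (∫ s, |f s| ^ p ∂μ) + 2 * (∫ s, |g s| ^ p ∂μ)
      - (∫ s, |f s + g s| ^ p ∂μ) - ∫ s, |f s - g s| ^ p ∂μ := by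
  have hfi := (integrable_abs_rpow hp hf).const_mul 2
  have hgi := (integrable_abs_rpow hp hg).const_mul 2
  have hadd : Integrable (fun s => |f s + g s| ^ p) μ := integrable_abs_rpow hp (hf.add hg)
  have hsub : Integrable (fun s => |f s - g s| ^ p) μ := integrable_abs_rpow hp (hf.sub hg)
  have hsum : Integrable (fun s => 2 * |f s| ^ p + 2 * |g s| ^ p) μ := hfi.add hgi
  have hdiff : Integrable (fun s => 2 * |f s| ^ p + 2 * |g s| ^ p - |f s + g s| ^ p) μ :=
    hsum.sub hadd
  unfold clarksonDefect
  rw [integral_sub hdiff hsub, integral_sub hsum hadd, integral_add hfi hgi, integral_const_mul,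
    integral_const_mul]

lemma integral_clarksonDefect_congr (hp : 0 < p)
    (hf : MemLp f (ENNReal.ofReal p) μ) (hg : MemLp g (ENNReal.ofReal p) μ)
    (hf' : MemLp f' (ENNReal.ofReal p) μ') (hg' : MemLp g' (ENNReal.ofReal p) μ')
    (h : ∀ u v : ℝ, ∫ s, |u * f s + v * g s| ^ p ∂μ = ∫ s, |u * f' s + v * g' s| ^ p ∂μ') (t : ℝ) :
    ∫ s, clarksonDefect p (f s) (t * g s) ∂μ = ∫ s, clarksonDefect p (f' s) (t * g' s) ∂μ' := by
  have hleft := h 1 0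
  have hright := h 0 t
  have hadd := h 1 t
  have hsub := h 1 (-t)
  simp only [one_mul, zero_mul, add_zero, zero_add, neg_mul, ← sub_eq_add_neg]
    at hleft hright hadd hsub
  rw [integral_clarksonDefect hp hf (hg.const_mul t),
    integral_clarksonDefect hp hf' (hg'.const_mul t), hleft, hright, hadd, hsub]

lemma integrable_prod_rpow_mul_clarksonDefect [SFinite μ] (hp : p < 2) (hq : 0 < q) (hqp : q < p)
    (hf : MemLp f (ENNReal.ofReal p) μ) (hg : MemLp g (ENNReal.ofReal p) μ) :
    Integrable (fun w : S × ℝ => w.2 ^ (-q - 1) * clarksonDefect p (f w.1) (w.2 * g w.1))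
      (μ.prod (volume.restrict (Ioi 0))) := by
  have hmeas : AEMeasurable
      (fun w : S × ℝ => w.2 ^ (-q - 1) * clarksonDefect p (f w.1) (w.2 * g w.1))
      (μ.prod (volume.restrict (Ioi 0))) :=
    (measurable_snd.pow_const _).aemeasurable.mul <|
      (measurable_clarksonDefect p).comp_aemeasurable (f := fun w : S × ℝ => (f w.1, w.2 * g w.1))
        (hf.1.aemeasurable.comp_fst.prodMk
          (measurable_snd.aemeasurable.mul hg.1.aemeasurable.comp_fst))
  refine (integrable_prod_iff hmeas.aestronglyMeasurable).2
    ⟨.of_forall fun s => integrableOn_rpow_mul_clarksonDefect hp hq hqp (f s) (g s), ?_⟩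
  have hnorm (s : S) : ∫ t in Ioi 0, ‖t ^ (-q - 1) * clarksonDefect p (f s) (t * g s)‖
      = clarksonMellin p q * (|f s| ^ (p - q) * |g s| ^ q) := by
    rw [← integral_rpow_mul_clarksonDefect hq hqp]
    refine setIntegral_congr_fun measurableSet_Ioi fun t ht => norm_of_nonneg ?_
    exact mul_nonneg (rpow_nonneg (le_of_lt ht) _) (clarksonDefect_nonneg (hq.trans hqp) hp _ _)
  simp only [hnorm]
  exact (integrable_abs_rpow_mul_abs_rpow hq hqp hf hg).const_mul _

lemma clarksonMellin_mul_integral_of_sFinite [SFinite μ] (hp : p < 2) (hq : 0 < q) (hqp : q < p)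
    (hf : MemLp f (ENNReal.ofReal p) μ) (hg : MemLp g (ENNReal.ofReal p) μ) :
    clarksonMellin p q * ∫ s, |f s| ^ (p - q) * |g s| ^ q ∂μ
      = ∫ t in Ioi 0, t ^ (-q - 1) * ∫ s, clarksonDefect p (f s) (t * g s) ∂μ := by
  simp only [← integral_const_mul, ← integral_rpow_mul_clarksonDefect hq hqp]
  exact integral_integral_swap (integrable_prod_rpow_mul_clarksonDefect hp hq hqp hf hg)

theorem clarksonMellin_mul_integral (hp : p < 2) (hq : 0 < q) (hqp : q < p)
    (hf : MemLp f (ENNReal.ofReal p) μ) (hg : MemLp g (ENNReal.ofReal p) μ) :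
    clarksonMellin p q * ∫ s, |f s| ^ (p - q) * |g s| ^ q ∂μ
      = ∫ t in Ioi 0, t ^ (-q - 1) * ∫ s, clarksonDefect p (f s) (t * g s) ∂μ := by
  have hp₀ : 0 < p := hq.trans hqp
  -- `f` lives on a σ-finite set, and both integrands over `S` vanish wherever `f` does.
  obtain ⟨T, hT, hfT, _⟩ := (hf.aefinStronglyMeasurable (ENNReal.ofReal_pos.2 hp₀).ne'
    ENNReal.ofReal_ne_top).exists_set_sigmaFinite
  have hzero : ∀ᵐ s ∂μ, s ∉ T → f s = 0 := (ae_restrict_iff' hT.compl).1 hfT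
  have hdep : ∫ s in T, |f s| ^ (p - q) * |g s| ^ q ∂μ = ∫ s, |f s| ^ (p - q) * |g s| ^ q ∂μ :=
    setIntegral_eq_integral_of_ae_compl_eq_zero <| hzero.mono fun s hs hsT => by
      rw [hs hsT, abs_zero, zero_rpow (sub_pos.2 hqp).ne', zero_mul]
  have hdefect (t : ℝ) : ∫ s in T, clarksonDefect p (f s) (t * g s) ∂μ
      = ∫ s, clarksonDefect p (f s) (t * g s) ∂μ :=
    setIntegral_eq_integral_of_ae_compl_eq_zero <| hzero.mono fun s hs hsT => by
      rw [hs hsT, clarksonDefect_zero_left hp₀.ne']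
  simpa only [hdep, hdefect] using
    clarksonMellin_mul_integral_of_sFinite hp hq hqp (hf.restrict T) (hg.restrict T)

theorem integral_abs_rpow_mul_abs_rpow_congr (hp : p < 2) (hq : 0 < q) (hqp : q < p)
    (hf : MemLp f (ENNReal.ofReal p) μ) (hg : MemLp g (ENNReal.ofReal p) μ)
    (hf' : MemLp f' (ENNReal.ofReal p) μ') (hg' : MemLp g' (ENNReal.ofReal p) μ')
    (h : ∀ u v : ℝ, ∫ s, |u * f s + v * g s| ^ p ∂μ = ∫ s, |u * f' s + v * g' s| ^ p ∂μ') :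
    ∫ s, |f s| ^ (p - q) * |g s| ^ q ∂μ = ∫ s, |f' s| ^ (p - q) * |g' s| ^ q ∂μ' := by
  refine mul_left_cancel₀ (clarksonMellin_pos hp hq hqp).ne' ?_
  simp only [clarksonMellin_mul_integral hp hq hqp hf hg,
    clarksonMellin_mul_integral hp hq hqp hf' hg',
    integral_clarksonDefect_congr (hq.trans hqp) hf hg hf' hg' h]

lemma dep1s_eq_integral (p : ℝ) (μ : Measure S) (f g : S → ℝ) :
    dep1s p μ f g = ∫ s, |f s| ^ (p - 1) * |g s| ^ (1 : ℝ) ∂μ := by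
  simp only [dep1s, rpow_one]

lemma dep2_eq_integral (p : ℝ) (μ : Measure S) (f g : S → ℝ) :
    dep2 p μ f g = ∫ s, |f s| ^ (p - p / 2) * |g s| ^ (p / 2) ∂μ := by
  simp only [dep2, abs_mul, mul_rpow (abs_nonneg _) (abs_nonneg _), sub_half]

end DependenceIntegrals

theorem stmt0_general {S S' : Type*} [MeasurableSpace S] [MeasurableSpace S']
    (μ : Measure S) (μ' : Measure S') (α : ℝ) (hα0 : 0 < α) (hα2 : α < 2)
    (f g : S → ℝ) (f' g' : S' → ℝ)
    (hf : MemLalpha α μ f) (hg : MemLalpha α μ g)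
    (hf' : MemLalpha α μ' f') (hg' : MemLalpha α μ' g')
    (heq : ∀ u v : ℝ, ∫ s, |u * f s + v * g s| ^ α ∂μ
      = ∫ s, |u * f' s + v * g' s| ^ α ∂μ') :
    dep2 α μ f g = dep2 α μ' f' g' ∧
    (1 < α →
      dep1s α μ f g = dep1s α μ' f' g' ∧ dep1 α μ f g = dep1 α μ' f' g') := by
  rw [memLalpha_iff_memLp hα0] at hf hg hf' hg'
  have heq_swap (u v : ℝ) :
      ∫ s, |u * g s + v * f s| ^ α ∂μ = ∫ s, |u * g' s + v * f' s| ^ α ∂μ' := by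
    simpa only [add_comm] using heq v u
  refine ⟨?_, fun hα1 => ?_⟩
  · simpa only [dep2_eq_integral] using integral_abs_rpow_mul_abs_rpow_congr hα2 (half_pos hα0)
      (half_lt_self hα0) hf hg hf' hg' heq
  · have hfg : dep1s α μ f g = dep1s α μ' f' g' := by
      simpa only [dep1s_eq_integral] using
        integral_abs_rpow_mul_abs_rpow_congr hα2 one_pos hα1 hf hg hf' hg' heq
    have hgf : dep1s α μ g f = dep1s α μ' g' f' := by
      simpa only [dep1s_eq_integral] using
        integral_abs_rpow_mul_abs_rpow_congr hα2 one_pos hα1 hg hf hg' hf' heq_swap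
    exact ⟨hfg, congr_arg₂ (· + ·) hfg hgf⟩

/-- Paper's Proposition 2.1: the dependence measures do not depend on the
spectral representation. -/
theorem stmt0 {S S' : Type*} [MeasurableSpace S] [MeasurableSpace S']
    (μ : Measure S) (μ' : Measure S') [SigmaFinite μ] [SigmaFinite μ']
    (α : ℝ) (hα0 : 0 < α) (hα2 : α < 2)
    (f g : S → ℝ) (f' g' : S' → ℝ)
    (hf : MemLalpha α μ f) (hg : MemLalpha α μ g)
    (hf' : MemLalpha α μ' f') (hg' : MemLalpha α μ' g')
    (heq : ∀ u v : ℝ, ∫ s, |u * f s + v * g s| ^ α ∂μ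
      = ∫ s, |u * f' s + v * g' s| ^ α ∂μ') :
    dep2 α μ f g = dep2 α μ' f' g' ∧
    (1 < α →
      dep1s α μ f g = dep1s α μ' f' g' ∧ dep1 α μ f g = dep1 α μ' f' g') :=
  stmt0_general μ μ' α hα0 hα2 f g f' g' hf hg hf' hg' heq
end

section
/- Let α ∈ (0,2), let f, g ∈ L^α(S, μ) be nonzero and satisfy Assumption (A1) with constant ε₁, and let ξ, η be jointly SαS with spectral pair (f, g). Then for all K, L ∈ L¹(ℝ, dx), the random variables K(ξ), L(η) and K(ξ)L(η) are integrable, the covariance Cov(K(ξ), L(η)) := E[K(ξ)L(η)] - E[K(ξ)]E[L(η)] is well defined, and |Cov(K(ξ), L(η))| ≤ C ‖K‖_{L¹} ‖L‖_{L¹} [f,g]₂, where the constant C depends only on ε₁, α, ‖f‖_α and ‖g‖_α. (Paper's Theorem 2.1.) -/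
open MeasureTheory Real Set Filter
open scoped ENNReal Topology

/-!
Let `φ`, `φ₁`, `φ₂` be the characteristic functions of `(ξ, η)`, `ξ` and `η`. For `0 < α ≤ 2` the
elementary bound `||x + y|^α - |x|^α - |y|^α| ≤ 2 |x y|^(α/2)` integrates to
`|‖uf + vg‖^α - ‖uf‖^α - ‖vg‖^α| ≤ 2 |uv|^(α/2) [f,g]₂`. Together with (A1) it yields (A2), that is
`‖uf + vg‖^α ≥ ε (‖uf‖^α + ‖vg‖^α)`. Hence the characteristic functions are integrable, and
`|φ(u,v) - φ₁(u) φ₂(v)| ≤ 2 |uv|^(α/2) [f,g]₂ exp(-ε (‖uf‖^α + ‖vg‖^α))`.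

By Fourier inversion the laws then have bounded densities, so `K(ξ)`, `L(η)` and `K(ξ) L(η)` are
integrable, and the joint density differs from the product of the marginal ones by at most
`(2π)⁻² ∫ |φ - φ₁ ⊗ φ₂|`. Integrating this difference against `K ⊗ L` bounds the covariance.
-/

section FourierInversion

open scoped FourierTransform RealInnerProductSpace ComplexOrder

variable {V : Type*} [NormedAddCommGroup V] [InnerProductSpace ℝ V]

/-- The Gaussian of inverse width `b` modulated to frequency `x`. Its Fourier transform is a
nonnegative Gaussian centered at `x`, which makes it an approximate identity in Fourier space. -/
noncomputable def modulatedGaussian (b : ℝ) (x w : V) : ℂ :=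
  Complex.exp (-b * ‖w‖ ^ 2 + 2 * π * Complex.I * ⟪x, w⟫)

theorem continuous_modulatedGaussian (b : ℝ) (x : V) : Continuous (modulatedGaussian b x) := by
  unfold modulatedGaussian
  fun_prop

theorem norm_modulatedGaussian (b : ℝ) (x w : V) :
    ‖modulatedGaussian b x w‖ = rexp (-b * ‖w‖ ^ 2) := by
  have hre : (-b * ‖w‖ ^ 2 + 2 * π * Complex.I * ⟪x, w⟫ : ℂ).re = -b * ‖w‖ ^ 2 := by
    simp [← Complex.ofReal_pow]
  rw [modulatedGaussian, Complex.norm_exp, hre]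

variable [FiniteDimensional ℝ V] [MeasurableSpace V] [BorelSpace V] {μ ν : Measure V}

theorem integrable_modulatedGaussian {b : ℝ} (hb : 0 < b) (x : V) :
    Integrable (modulatedGaussian b x) :=
  GaussianFourier.integrable_cexp_neg_mul_sq_norm_add (by simpa) _ _

theorem fourier_modulatedGaussian {b : ℝ} (hb : 0 < b) (x y : V) :
    𝓕 (modulatedGaussian b x) y = ((π / b) ^ (Module.finrank ℝ V / 2 : ℝ)
      * rexp (-(π ^ 2 / b) * ‖x - y‖ ^ 2) : ℝ) := by
  unfold modulatedGaussian
  rw [fourier_gaussian_innerProductSpace' (by simpa)]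
  push_cast [Complex.ofReal_cpow (div_pos pi_pos hb).le]
  ring_nf

theorem integrable_fourier_modulatedGaussian {b : ℝ} (hb : 0 < b) (x : V) :
    Integrable (𝓕 (modulatedGaussian b x)) := by
  have hg : Integrable fun y : V => rexp (-(π ^ 2 / b) * ‖x - y‖ ^ 2) := by
    simpa only [norm_modulatedGaussian] using
      (integrable_modulatedGaussian (show 0 < π ^ 2 / b by positivity) (0 : V)).norm.comp_sub_left x
  rw [funext (fourier_modulatedGaussian hb x)]
  exact (hg.const_mul _).ofReal

/-- The density of `μ` recovered from its characteristic function by Fourier inversion. The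
rescaling by `-2π` converts `charFun` to the normalization of Mathlib's Fourier transform. -/
noncomputable def charFunDensity (μ : Measure V) (x : V) : ℝ :=
  (𝓕⁻ (fun ξ : V => charFun μ (-(2 * π) • ξ)) x).re

theorem integral_fourier_eq_integral_mul_charFun [IsFiniteMeasure μ] {h : V → ℂ}
    (hh : Integrable h) : ∫ x, 𝓕 h x ∂μ = ∫ ξ, h ξ * charFun μ (-(2 * π) • ξ) := by
  have key := VectorFourier.integral_fourierIntegral_smul_eq_flip (L := innerₗ V) (μ := volume)
    (ν := μ) (g := (1 : V → ℂ)) Real.continuous_fourierChar (by simpa using continuous_inner) hh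
    (integrable_const 1)
  have hflip (ξ : V) : VectorFourier.fourierIntegral 𝐞 μ (innerₗ V).flip 1 ξ
      = charFun μ (-(2 * π) • ξ) := by
    rw [charFun_eq_fourierIntegral', smul_smul, neg_mul_neg, inv_mul_cancel₀ (by positivity),
      one_smul, flip_innerₗ]
  simp only [hflip, smul_eq_mul, Pi.one_apply, mul_one] at key
  exact key

theorem integrable_charFun_smul (hμ : Integrable (charFun μ)) :
    Integrable fun ξ : V => charFun μ (-(2 * π) • ξ) :=
  hμ.comp_smul (by simp [Real.pi_ne_zero])

theorem integrable_fourierChar_inner_smul {h : V → ℂ} (hh : Integrable h) (x : V) :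
    Integrable fun w : V => 𝐞 ⟪w, x⟫ • h w := by
  simpa only [LinearMap.neg_apply, neg_neg, innerₗ_apply_apply] using
    (VectorFourier.fourierIntegral_convergent_iff (L := -innerₗ V) Real.continuous_fourierChar
      continuous_inner.neg x).2 hh

theorem fourierInv_charFun_nonneg [IsFiniteMeasure μ] (hμ : Integrable (charFun μ)) (x : V) :
    0 ≤ 𝓕⁻ (fun ξ : V => charFun μ (-(2 * π) • ξ)) x := by
  -- Gaussian regularization turns the inverse transform into a limit of `μ`-integrals of
  -- nonnegative Gaussians centered at `x`.
  have hlim := tendsto_integral_cexp_sq_smul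
    (integrable_fourierChar_inner_smul (integrable_charFun_smul hμ) x)
  rw [← Real.fourierInv_eq] at hlim
  refine ge_of_tendsto hlim ?_
  filter_upwards [Ioi_mem_atTop 0] with c (hc : 0 < c)
  calc (0 : ℂ) ≤ ∫ y, 𝓕 (modulatedGaussian c⁻¹ x) y ∂μ := integral_nonneg fun y => by
        rw [fourier_modulatedGaussian (inv_pos.2 hc)]
        exact_mod_cast (by positivity)
    _ = ∫ w, modulatedGaussian c⁻¹ x w * charFun μ (-(2 * π) • w) :=
        integral_fourier_eq_integral_mul_charFun (integrable_modulatedGaussian (inv_pos.2 hc) x)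
    _ = _ := integral_congr_ae (.of_forall fun w => ?_)
  simp only [modulatedGaussian, Circle.smul_def, Real.fourierChar_apply, smul_eq_mul]
  rw [← mul_assoc, ← Complex.exp_add, real_inner_comm]
  congr 3
  push_cast
  ring

theorem charFunDensity_nonneg [IsFiniteMeasure μ] (hμ : Integrable (charFun μ)) (x : V) :
    0 ≤ charFunDensity μ x :=
  (Complex.nonneg_iff.1 (fourierInv_charFun_nonneg hμ x)).1

theorem ofReal_charFunDensity [IsFiniteMeasure μ] (hμ : Integrable (charFun μ)) (x : V) :
    (charFunDensity μ x : ℂ) = 𝓕⁻ (fun ξ : V => charFun μ (-(2 * π) • ξ)) x :=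
  Complex.ext rfl (Complex.nonneg_iff.1 (fourierInv_charFun_nonneg hμ x)).2

theorem continuous_charFunDensity (hμ : Integrable (charFun μ)) :
    Continuous (charFunDensity μ) :=
  Complex.continuous_re.comp <| VectorFourier.fourierIntegral_continuous
    Real.continuous_fourierChar (L := -innerₗ V) continuous_inner.neg (integrable_charFun_smul hμ)

theorem abs_charFunDensity_sub_le (hμ : Integrable (charFun μ)) (hν : Integrable (charFun ν))
    (x : V) : |charFunDensity μ x - charFunDensity ν x|
      ≤ ((2 * π) ^ Module.finrank ℝ V)⁻¹ * ∫ t, ‖charFun μ t - charFun ν t‖ := by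
  have hint {ρ : Measure V} (hρ : Integrable (charFun ρ)) :
      Integrable fun w : V => 𝐞 ⟪w, x⟫ • charFun ρ (-(2 * π) • w) :=
    integrable_fourierChar_inner_smul (integrable_charFun_smul hρ) x
  calc |charFunDensity μ x - charFunDensity ν x|
      ≤ ‖𝓕⁻ (fun w : V => charFun μ (-(2 * π) • w)) x
          - 𝓕⁻ (fun w : V => charFun ν (-(2 * π) • w)) x‖ := by
        rw [charFunDensity, charFunDensity, ← Complex.sub_re]
        exact Complex.abs_re_le_norm _
    _ = ‖∫ w : V, 𝐞 ⟪w, x⟫ • (charFun μ (-(2 * π) • w) - charFun ν (-(2 * π) • w))‖ := by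
        simp only [Real.fourierInv_eq, smul_sub, integral_sub (hint hμ) (hint hν)]
    _ ≤ ∫ w : V, ‖charFun μ (-(2 * π) • w) - charFun ν (-(2 * π) • w)‖ := by
        simpa only [Circle.norm_smul] using norm_integral_le_integral_norm
          (fun w : V => 𝐞 ⟪w, x⟫ • (charFun μ (-(2 * π) • w) - charFun ν (-(2 * π) • w)))
    _ = ((2 * π) ^ Module.finrank ℝ V)⁻¹ * ∫ t, ‖charFun μ t - charFun ν t‖ := by
        rw [Measure.integral_comp_smul volume (fun t => ‖charFun μ t - charFun ν t‖), smul_eq_mul,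
          abs_inv, abs_pow, abs_neg, abs_of_pos two_pi_pos]

theorem integrable_fourierInv {G : V → ℂ} (hG : Integrable (𝓕 G)) : Integrable (𝓕⁻ G) :=
  hG.comp_neg.congr (.of_forall fun x => (Real.fourierInv_eq_fourier_neg G x).symm)

theorem integral_eq_integral_mul_charFunDensity [IsFiniteMeasure μ] (hμ : Integrable (charFun μ))
    {G : V → ℂ} (hGc : Continuous G) (hG : Integrable G) (hFG : Integrable (𝓕 G)) :
    ∫ x, G x ∂μ = ∫ x, G x * charFunDensity μ x := by
  have hflip : ∫ ξ, 𝓕⁻ G ξ * charFun μ (-(2 * π) • ξ)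
      = ∫ x, G x * 𝓕⁻ (fun ξ : V => charFun μ (-(2 * π) • ξ)) x := by
    have key := VectorFourier.integral_fourierIntegral_smul_eq_flip (L := -innerₗ V)
      (μ := volume) (ν := volume) Real.continuous_fourierChar continuous_inner.neg hG
      (integrable_charFun_smul hμ)
    rwa [show (-innerₗ V).flip = -innerₗ V from congrArg Neg.neg (flip_innerₗ V)] at key
  calc ∫ x, G x ∂μ = ∫ x, 𝓕 (𝓕⁻ G) x ∂μ := by rw [hGc.fourier_fourierInv_eq hG hFG]
    _ = ∫ ξ, 𝓕⁻ G ξ * charFun μ (-(2 * π) • ξ) :=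
        integral_fourier_eq_integral_mul_charFun (integrable_fourierInv hFG)
    _ = ∫ x, G x * charFunDensity μ x := by simp only [hflip, ofReal_charFunDensity hμ]

theorem ext_of_integral_modulatedGaussian (hμ : Integrable (fun x : V => rexp (-‖x‖ ^ 2)) μ)
    (hν : Integrable (fun x : V => rexp (-‖x‖ ^ 2)) ν)
    (h : ∀ y : V, ∫ x, modulatedGaussian 1 y x ∂μ = ∫ x, modulatedGaussian 1 y x ∂ν) : μ = ν := by
  -- The hypothesis `h` says that the Gaussian-weighted measures have the same `charFun`.
  set γ : V → ℝ≥0∞ := fun x => ENNReal.ofReal (rexp (-‖x‖ ^ 2))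
  have hγ : Measurable γ := by fun_prop
  have hchar (ρ : Measure V) (t : V) : charFun (ρ.withDensity γ) t
      = ∫ x, modulatedGaussian 1 ((2 * π)⁻¹ • t) x ∂ρ := by
    rw [charFun_apply, integral_withDensity_eq_integral_toReal_smul hγ (by simp [γ])]
    refine integral_congr_ae (.of_forall fun x => ?_)
    simp only [γ, modulatedGaussian, ENNReal.toReal_ofReal (Real.exp_nonneg _),
      Complex.real_smul, real_inner_smul_left]
    rw [Complex.ofReal_exp, ← Complex.exp_add, real_inner_comm]
    push_cast
    field_simp
  have := isFiniteMeasure_withDensity_ofReal hμ.2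
  have := isFiniteMeasure_withDensity_ofReal hν.2
  have heq : μ.withDensity γ = ν.withDensity γ :=
    Measure.ext_of_charFun (by ext t; rw [hchar, hchar, h])
  have hinv (ρ : Measure V) : (ρ.withDensity γ).withDensity (fun x => (γ x)⁻¹) = ρ :=
    withDensity_inv_same hγ (by simp [γ, Real.exp_pos]) (by simp [γ])
  rw [← hinv μ, heq, hinv]

theorem abs_charFunDensity_le (hμ : Integrable (charFun μ)) (x : V) :
    |charFunDensity μ x| ≤ ((2 * π) ^ Module.finrank ℝ V)⁻¹ * ∫ t, ‖charFun μ t‖ := by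
  have h0 : charFun (0 : Measure V) = 0 := by ext; simp [charFun]
  have := abs_charFunDensity_sub_le hμ (ν := 0) (by rw [h0]; exact integrable_zero _ _ _) x
  simpa [h0, charFunDensity, Real.fourierInv_eq] using this

variable {E : Type*} [NormedAddCommGroup E] [NormedSpace ℝ E] {F : V → E}

theorem integrable_charFunDensity_smul (hμ : Integrable (charFun μ)) (hF : Integrable F) :
    Integrable fun x => charFunDensity μ x • F x :=
  hF.bdd_smul _ (continuous_charFunDensity hμ).aestronglyMeasurable
    (.of_forall (abs_charFunDensity_le hμ))

theorem integrable_withDensity_charFunDensity [IsFiniteMeasure μ] (hμ : Integrable (charFun μ))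
    (hF : Integrable F) :
    Integrable F (volume.withDensity fun x => ENNReal.ofReal (charFunDensity μ x)) := by
  rw [integrable_withDensity_iff_integrable_smul'
    (continuous_charFunDensity hμ).measurable.ennreal_ofReal (by simp)]
  simpa only [ENNReal.toReal_ofReal (charFunDensity_nonneg hμ _)]
    using integrable_charFunDensity_smul hμ hF

theorem integral_withDensity_charFunDensity [IsFiniteMeasure μ] (hμ : Integrable (charFun μ)) :
    ∫ x, F x ∂volume.withDensity (fun x => ENNReal.ofReal (charFunDensity μ x))
      = ∫ x, charFunDensity μ x • F x := by
  rw [integral_withDensity_eq_integral_toReal_smul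
    (continuous_charFunDensity hμ).measurable.ennreal_ofReal (by simp)]
  simp only [ENNReal.toReal_ofReal (charFunDensity_nonneg hμ _)]

theorem eq_withDensity_charFunDensity [IsFiniteMeasure μ] (hμ : Integrable (charFun μ)) :
    μ = volume.withDensity (fun x => ENNReal.ofReal (charFunDensity μ x)) := by
  have hγ : Integrable fun x : V => rexp (-‖x‖ ^ 2) := by
    simpa [norm_modulatedGaussian] using (integrable_modulatedGaussian one_pos (0 : V)).norm
  refine ext_of_integral_modulatedGaussian ?_ (integrable_withDensity_charFunDensity hμ hγ)
    fun y => ?_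
  · exact .of_bound (by fun_prop) 1 (.of_forall fun x => by simp)
  · rw [integral_withDensity_charFunDensity hμ,
      integral_eq_integral_mul_charFunDensity hμ (continuous_modulatedGaussian 1 y)
        (integrable_modulatedGaussian one_pos y) (integrable_fourier_modulatedGaussian one_pos y)]
    simp only [Complex.real_smul, mul_comm]

theorem integrable_of_integrable_charFun [IsFiniteMeasure μ] (hμ : Integrable (charFun μ))
    (hF : Integrable F) : Integrable F μ := by
  rw [eq_withDensity_charFunDensity hμ]
  exact integrable_withDensity_charFunDensity hμ hF

theorem norm_integral_sub_integral_le [IsFiniteMeasure μ] [IsFiniteMeasure ν]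
    (hμ : Integrable (charFun μ)) (hν : Integrable (charFun ν)) (hF : Integrable F) :
    ‖∫ x, F x ∂μ - ∫ x, F x ∂ν‖ ≤ ((2 * π) ^ Module.finrank ℝ V)⁻¹
      * (∫ t, ‖charFun μ t - charFun ν t‖) * ∫ x, ‖F x‖ := by
  have hint {ρ : Measure V} [IsFiniteMeasure ρ] (hρ : Integrable (charFun ρ)) :
      ∫ x, F x ∂ρ = ∫ x, charFunDensity ρ x • F x := by
    rw [← integral_withDensity_charFunDensity hρ, ← eq_withDensity_charFunDensity hρ]
  rw [hint hμ, hint hν, ← integral_sub (integrable_charFunDensity_smul hμ hF)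
    (integrable_charFunDensity_smul hν hF), ← integral_const_mul]
  refine norm_integral_le_of_norm_le (hF.norm.const_mul _) (.of_forall fun x => ?_)
  rw [← sub_smul, norm_smul]
  exact mul_le_mul_of_nonneg_right (abs_charFunDensity_sub_le hμ hν x) (norm_nonneg _)

end FourierInversion

section Covariance

open scoped RealInnerProductSpace

variable {E F : Type*} [NormedAddCommGroup E] [InnerProductSpace ℝ E] [MeasurableSpace E]
  [NormedAddCommGroup F] [InnerProductSpace ℝ F] [MeasurableSpace F]
  {ρ σ : Measure (E × F)} {μ : Measure E} {ν : Measure F}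

/-- The characteristic function of a measure on a product, as a function on the product.
Mathlib's `charFun` needs an inner product, which `E × F` only carries as `WithLp 2 (E × F)`. -/
noncomputable def charFunPair (ρ : Measure (E × F)) (t : E × F) : ℂ :=
  charFun (ρ.map (WithLp.toLp 2)) (WithLp.toLp 2 t)

theorem charFunPair_apply (t : E × F) : charFunPair ρ t
    = ∫ x, Complex.exp ((⟪x.1, t.1⟫ + ⟪x.2, t.2⟫ : ℝ) * Complex.I) ∂ρ := by
  rw [charFunPair, charFun_apply, ← MeasurableEquiv.coe_toLp, integral_map_equiv]
  simp only [MeasurableEquiv.coe_toLp, WithLp.prod_inner_apply]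

theorem charFunPair_prod [SFinite μ] [SFinite ν] (t : E × F) :
    charFunPair (μ.prod ν) t = charFun μ t.1 * charFun ν t.2 :=
  charFun_prod (WithLp.toLp 2 t)

variable [FiniteDimensional ℝ E] [BorelSpace E] [FiniteDimensional ℝ F] [BorelSpace F]
  {G : Type*} [NormedAddCommGroup G] {H : E × F → G}

theorem measurable_charFunPair [SFinite ρ] : Measurable (charFunPair ρ) :=
  measurable_charFun.comp (WithLp.measurable_toLp 2 (E × F))

theorem integrable_comp_ofLp (hH : Integrable H) :
    Integrable fun z : WithLp 2 (E × F) => H (WithLp.ofLp z) :=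
  ((WithLp.volume_preserving_ofLp E F).integrable_comp_emb
    (MeasurableEquiv.toLp 2 (E × F)).symm.measurableEmbedding).2 hH

theorem integrable_charFun_map_toLp (hρ : Integrable (charFunPair ρ)) :
    Integrable (charFun (ρ.map (WithLp.toLp 2))) :=
  integrable_comp_ofLp hρ

variable [NormedSpace ℝ G]

theorem integral_comp_ofLp (H : E × F → G) :
    ∫ z : WithLp 2 (E × F), H (WithLp.ofLp z) = ∫ x, H x :=
  (WithLp.volume_preserving_ofLp E F).integral_comp
    (MeasurableEquiv.toLp 2 (E × F)).symm.measurableEmbedding H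

theorem integrable_of_integrable_charFunPair [IsFiniteMeasure ρ]
    (hρ : Integrable (charFunPair ρ)) (hH : Integrable H) : Integrable H ρ :=
  (integrable_map_equiv (MeasurableEquiv.toLp 2 (E × F)) _).1 <|
    integrable_of_integrable_charFun (integrable_charFun_map_toLp hρ) (integrable_comp_ofLp hH)

theorem norm_integral_sub_integral_le_of_charFunPair [IsFiniteMeasure ρ] [IsFiniteMeasure σ]
    (hρ : Integrable (charFunPair ρ)) (hσ : Integrable (charFunPair σ)) (hH : Integrable H) :
    ‖∫ x, H x ∂ρ - ∫ x, H x ∂σ‖ ≤ ((2 * π) ^ Module.finrank ℝ (E × F))⁻¹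
      * (∫ t, ‖charFunPair ρ t - charFunPair σ t‖) * ∫ x, ‖H x‖ := by
  have key := norm_integral_sub_integral_le (integrable_charFun_map_toLp hρ)
    (integrable_charFun_map_toLp hσ) (integrable_comp_ofLp hH)
  have hmap (τ : Measure (E × F)) :
      ∫ z, H (WithLp.ofLp z) ∂τ.map (WithLp.toLp 2) = ∫ x, H x ∂τ :=
    integral_map_equiv (MeasurableEquiv.toLp 2 (E × F)) _
  rw [hmap, hmap, integral_comp_ofLp (fun x => ‖H x‖),
    (WithLp.linearEquiv 2 ℝ (E × F)).finrank_eq] at key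
  rwa [← integral_comp_ofLp (fun t => ‖charFunPair ρ t - charFunPair σ t‖)]

theorem abs_integral_mul_sub_le {K : E → ℝ} {L : F → ℝ} [IsFiniteMeasure ρ] [IsFiniteMeasure μ]
    [IsFiniteMeasure ν] (hρ : Integrable (charFunPair ρ)) (hμ : Integrable (charFun μ))
    (hν : Integrable (charFun ν)) (hK : Integrable K) (hL : Integrable L) :
    |∫ x, K x.1 * L x.2 ∂ρ - (∫ x, K x ∂μ) * ∫ y, L y ∂ν|
      ≤ ((2 * π) ^ Module.finrank ℝ (E × F))⁻¹
        * (∫ t : E × F, ‖charFunPair ρ t - charFun μ t.1 * charFun ν t.2‖)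
        * ((∫ x, |K x|) * ∫ y, |L y|) := by
  have hprod : Integrable (charFunPair (μ.prod ν)) :=
    (hμ.mul_prod hν).congr (.of_forall fun t => (charFunPair_prod t).symm)
  have key := norm_integral_sub_integral_le_of_charFunPair hρ hprod (hK.mul_prod hL)
  simp only [charFunPair_prod, norm_mul, Real.norm_eq_abs] at key
  rwa [integral_prod_mul, Measure.volume_eq_prod,
    integral_prod_mul (fun x => |K x|) (fun y => |L y|)] at key

end Covariance

section RealInequalities

theorem rpow_half_sq {x : ℝ} (hx : 0 ≤ x) (α : ℝ) : (x ^ (α / 2)) ^ 2 = x ^ α := by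
  rw [← Real.rpow_mul_natCast hx]
  norm_num

theorem abs_norm_add_rpow_sub_le {E : Type*} [SeminormedAddCommGroup E] {α : ℝ} (hα0 : 0 ≤ α)
    (hα2 : α ≤ 2) (a b : E) :
    |‖a + b‖ ^ α - (‖a‖ ^ α + ‖b‖ ^ α)| ≤ 2 * (‖a‖ * ‖b‖) ^ (α / 2) := by
  -- By subadditivity of `x ^ (α / 2)`, the numbers `‖a‖ ^ (α / 2)`, `‖b‖ ^ (α / 2)` and
  -- `‖a + b‖ ^ (α / 2)` satisfy the triangle inequalities; squaring them gives the claim.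
  have hsub {x y z : ℝ} (hx : 0 ≤ x) (hy : 0 ≤ y) (hz : 0 ≤ z) (h : z ≤ x + y) :
      z ^ (α / 2) ≤ x ^ (α / 2) + y ^ (α / 2) :=
    (Real.rpow_le_rpow hz h (by linarith)).trans
      (Real.rpow_add_le_add_rpow hx hy (by linarith) (by linarith))
  have ha := norm_nonneg a
  have hb := norm_nonneg b
  have hab := norm_nonneg (a + b)
  have h₁ := hsub ha hb hab (norm_add_le a b)
  have h₂ := hsub hab hb ha (by simpa using norm_sub_le (a + b) b)
  have h₃ := hsub hab ha hb (by simpa using norm_sub_le (a + b) a)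
  rw [← rpow_half_sq ha, ← rpow_half_sq hb, ← rpow_half_sq hab, Real.mul_rpow ha hb, abs_le]
  constructor <;> nlinarith [Real.rpow_nonneg ha (α / 2), Real.rpow_nonneg hb (α / 2),
    Real.rpow_nonneg hab (α / 2)]

theorem abs_exp_neg_sub_exp_neg_le {m x y : ℝ} (hx : m ≤ x) (hy : m ≤ y) :
    |rexp (-x) - rexp (-y)| ≤ |x - y| * rexp (-m) := by
  wlog hxy : x ≤ y generalizing x y
  · rw [abs_sub_comm, abs_sub_comm x]
    exact this hy hx (le_of_not_ge hxy)
  have hexp : rexp (-y) = rexp (-x) * rexp (-(y - x)) := by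
    rw [← Real.exp_add]
    ring_nf
  rw [abs_sub_comm x, abs_of_nonneg (sub_nonneg.2 hxy),
    abs_of_nonneg (sub_nonneg.2 (Real.exp_le_exp.2 (neg_le_neg hxy)))]
  calc rexp (-x) - rexp (-y) = (1 - rexp (-(y - x))) * rexp (-x) := by rw [hexp]; ring
    _ ≤ (y - x) * rexp (-m) :=
        mul_le_mul (by linarith [Real.add_one_le_exp (-(y - x))])
          (Real.exp_le_exp.2 (neg_le_neg hx)) (Real.exp_nonneg _) (sub_nonneg.2 hxy)

theorem integrable_abs_rpow_mul_exp_neg_mul_abs_rpow {p s b : ℝ} (hs : -1 < s) (hp : 0 < p)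
    (hb : 0 < b) : Integrable fun x : ℝ => |x| ^ s * rexp (-b * |x| ^ p) := by
  refine (integrable_fun_norm_addHaar volume (f := fun x => x ^ s * rexp (-b * x ^ p))).2 ?_
  simpa using integrableOn_rpow_mul_exp_neg_mul_rpow hs hp hb

theorem integral_abs_rpow_mul_exp_neg_mul_abs_rpow {p s b : ℝ} (hs : -1 < s) (hp : 0 < p)
    (hb : 0 < b) : ∫ x : ℝ, |x| ^ s * rexp (-b * |x| ^ p)
      = 2 * (b ^ (-(s + 1) / p) * (1 / p) * Gamma ((s + 1) / p)) := by
  rw [← integral_rpow_mul_exp_neg_mul_rpow hp hs hb]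
  exact integral_comp_abs (f := fun x => x ^ s * rexp (-b * x ^ p))

end RealInequalities

section SpectralFunctional

variable {α ε : ℝ} {S : Type*} [MeasurableSpace S] {μ : Measure S} {f g : S → ℝ}

theorem nrm_nonneg (α : ℝ) (μ : Measure S) (f : S → ℝ) : 0 ≤ nrm α μ f :=
  Real.rpow_nonneg (integral_nonneg fun _ => by positivity) _

theorem dep2_nonneg (α : ℝ) (μ : Measure S) (f g : S → ℝ) : 0 ≤ dep2 α μ f g :=
  integral_nonneg fun _ => by positivity

theorem nrm_rpow (hα : α ≠ 0) : nrm α μ f ^ α = ∫ s, |f s| ^ α ∂μ := by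
  rw [nrm, one_div, Real.rpow_inv_rpow (integral_nonneg fun _ => by positivity) hα]

theorem nrm_const_mul (hα : α ≠ 0) (u : ℝ) :
    nrm α μ (fun s => u * f s) = |u| * nrm α μ f := by
  simp only [nrm, abs_mul, Real.mul_rpow (abs_nonneg _) (abs_nonneg _), integral_const_mul]
  rw [Real.mul_rpow (by positivity) (integral_nonneg fun _ => by positivity), one_div,
    Real.rpow_rpow_inv (abs_nonneg u) hα]

theorem dep2_const_mul_const_mul (u v : ℝ) :
    dep2 α μ (fun s => u * f s) (fun s => v * g s) = |u * v| ^ (α / 2) * dep2 α μ f g := by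
  simp only [dep2, mul_mul_mul_comm u _ v, abs_mul (u * v),
    Real.mul_rpow (abs_nonneg _) (abs_nonneg _), integral_const_mul]

theorem MemLalpha.const_mul (hf : MemLalpha α μ f) (u : ℝ) :
    MemLalpha α μ fun s => u * f s := by
  refine ⟨hf.1.const_mul u, ?_⟩
  simpa only [abs_mul, Real.mul_rpow (abs_nonneg _) (abs_nonneg _)] using hf.2.const_mul (|u| ^ α)

theorem MemLalpha.integrable_abs_mul_rpow (hf : MemLalpha α μ f) (hg : MemLalpha α μ g) :
    Integrable (fun s => |f s * g s| ^ (α / 2)) μ := by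
  refine (hf.2.add hg.2).mono'
    ((hf.1.mul hg.1).aemeasurable.abs.pow_const _).aestronglyMeasurable (.of_forall fun s => ?_)
  rw [Real.norm_of_nonneg (by positivity), abs_mul, Real.mul_rpow (abs_nonneg _) (abs_nonneg _)]
  rw [Pi.add_apply, ← rpow_half_sq (abs_nonneg (f s)) α, ← rpow_half_sq (abs_nonneg (g s)) α]
  nlinarith [sq_nonneg (|f s| ^ (α / 2) - |g s| ^ (α / 2)),
    mul_nonneg (Real.rpow_nonneg (abs_nonneg (f s)) (α / 2))
      (Real.rpow_nonneg (abs_nonneg (g s)) (α / 2))]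

theorem MemLalpha.add (hα0 : 0 ≤ α) (hα2 : α ≤ 2) (hf : MemLalpha α μ f) (hg : MemLalpha α μ g) :
    MemLalpha α μ fun s => f s + g s := by
  refine ⟨hf.1.add hg.1, ((hf.2.add hg.2).add ((hf.integrable_abs_mul_rpow hg).const_mul 2)).mono'
    ((hf.1.add hg.1).aemeasurable.abs.pow_const _).aestronglyMeasurable (.of_forall fun s => ?_)⟩
  have h := (abs_le.1 (abs_norm_add_rpow_sub_le hα0 hα2 (f s) (g s))).2
  simp only [Real.norm_eq_abs, ← abs_mul] at h
  rw [Real.norm_of_nonneg (by positivity)]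
  simp only [Pi.add_apply]
  linarith

theorem abs_nrm_add_rpow_sub_le (hα0 : 0 < α) (hα2 : α ≤ 2) (hf : MemLalpha α μ f)
    (hg : MemLalpha α μ g) :
    |nrm α μ (fun s => f s + g s) ^ α - (nrm α μ f ^ α + nrm α μ g ^ α)| ≤ 2 * dep2 α μ f g := by
  have hfg : Integrable (fun s => |f s + g s| ^ α) μ := (hf.add hα0.le hα2 hg).2
  have hsum : Integrable (fun s => |f s| ^ α + |g s| ^ α) μ := hf.2.add hg.2
  simp only [nrm_rpow hα0.ne']
  rw [← integral_add hf.2 hg.2, ← integral_sub hfg hsum, dep2, ← integral_const_mul,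
    ← Real.norm_eq_abs]
  refine norm_integral_le_of_norm_le ((hf.integrable_abs_mul_rpow hg).const_mul 2)
    (.of_forall fun s => ?_)
  simpa only [Real.norm_eq_abs, abs_mul] using
    abs_norm_add_rpow_sub_le hα0.le hα2 (f s) (g s)

theorem A1.le_one (h : A1 α ε μ f g) (hf : 0 < nrm α μ f) (hg : 0 < nrm α μ g) : ε ≤ 1 := by
  have hpos : 0 < nrm α μ f ^ (α / 2) * nrm α μ g ^ (α / 2) := by positivity
  unfold A1 at h
  nlinarith [dep2_nonneg α μ f g]

theorem A1.const_mul_const_mul (hα : α ≠ 0) (h : A1 α ε μ f g) (u v : ℝ) :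
    A1 α ε μ (fun s => u * f s) fun s => v * g s := by
  have hu := abs_nonneg u
  have hv := abs_nonneg v
  have hscale := mul_le_mul_of_nonneg_left h (show 0 ≤ |u * v| ^ (α / 2) by positivity)
  simp only [A1, nrm_const_mul hα, dep2_const_mul_const_mul,
    Real.mul_rpow hu (nrm_nonneg α μ f), Real.mul_rpow hv (nrm_nonneg α μ g)]
  rw [abs_mul, Real.mul_rpow hu hv] at *
  linarith

theorem A1.mul_add_le_nrm_add_rpow (hα0 : 0 < α) (hα2 : α ≤ 2) (hε : ε ≤ 1)
    (hf : MemLalpha α μ f) (hg : MemLalpha α μ g) (h : A1 α ε μ f g) :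
    ε * (nrm α μ f ^ α + nrm α μ g ^ α) ≤ nrm α μ (fun s => f s + g s) ^ α := by
  have hlow := (abs_le.1 (abs_nrm_add_rpow_sub_le hα0 hα2 hf hg)).1
  unfold A1 at h
  rw [← rpow_half_sq (nrm_nonneg α μ f) α, ← rpow_half_sq (nrm_nonneg α μ g) α] at hlow ⊢
  nlinarith [mul_nonneg (sub_nonneg.2 hε) (sq_nonneg (nrm α μ f ^ (α / 2) - nrm α μ g ^ (α / 2)))]

theorem A1.a2 (hα0 : 0 < α) (hα2 : α ≤ 2) (hε : ε ≤ 1) (hf : MemLalpha α μ f)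
    (hg : MemLalpha α μ g) (h : A1 α ε μ f g) : A2 α ε μ f g := fun u v => by
  simpa only [nrm_const_mul hα0.ne', Real.mul_rpow (abs_nonneg _) (nrm_nonneg _ _ _)] using
    (h.const_mul_const_mul hα0.ne' u v).mul_add_le_nrm_add_rpow hα0 hα2 hε (hf.const_mul u)
      (hg.const_mul v)

theorem A2.le_one (hα : α ≠ 0) (h : A2 α ε μ f g) (hf : 0 < nrm α μ f) : ε ≤ 1 := by
  have h₁ : ε * nrm α μ f ^ α ≤ nrm α μ f ^ α := by simpa [hα] using h 1 0
  exact (mul_le_iff_le_one_left (by positivity)).1 h₁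

theorem A2.abs_Ufun_le (hα0 : 0 < α) (hα2 : α ≤ 2) (hε : ε ≤ 1) (hf : MemLalpha α μ f)
    (hg : MemLalpha α μ g) (h : A2 α ε μ f g) (u v : ℝ) :
    |Ufun α μ f g u v| ≤ 2 * dep2 α μ f g
      * ((|u| ^ (α / 2) * rexp (-(ε * nrm α μ f ^ α) * |u| ^ α))
        * (|v| ^ (α / 2) * rexp (-(ε * nrm α μ g ^ α) * |v| ^ α))) := by
  set a := nrm α μ (fun s => u * f s) ^ α with ha
  set b := nrm α μ (fun s => v * g s) ^ α with hb
  have ha' : a = |u| ^ α * nrm α μ f ^ α := by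
    rw [ha, nrm_const_mul hα0.ne', Real.mul_rpow (abs_nonneg _) (nrm_nonneg _ _ _)]
  have hb' : b = |v| ^ α * nrm α μ g ^ α := by
    rw [hb, nrm_const_mul hα0.ne', Real.mul_rpow (abs_nonneg _) (nrm_nonneg _ _ _)]
  have hab : 0 ≤ a + b := add_nonneg (Real.rpow_nonneg (nrm_nonneg _ _ _) _)
    (Real.rpow_nonneg (nrm_nonneg _ _ _) _)
  have hlow : ε * (a + b) ≤ nrm α μ (fun s => u * f s + v * g s) ^ α := by
    rw [ha', hb']
    exact h u v
  have hexp := abs_exp_neg_sub_exp_neg_le hlow (mul_le_of_le_one_left hab hε)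
  have hnrm := abs_nrm_add_rpow_sub_le hα0 hα2 (hf.const_mul u) (hg.const_mul v)
  rw [dep2_const_mul_const_mul, abs_mul, Real.mul_rpow (abs_nonneg _) (abs_nonneg _)] at hnrm
  calc |Ufun α μ f g u v|
      = |rexp (-(nrm α μ (fun s => u * f s + v * g s) ^ α)) - rexp (-(a + b))| := by
        rw [Ufun, neg_add']
    _ ≤ 2 * (|u| ^ (α / 2) * |v| ^ (α / 2) * dep2 α μ f g) * rexp (-(ε * (a + b))) :=
        hexp.trans (mul_le_mul_of_nonneg_right hnrm (Real.exp_nonneg _))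
    _ = _ := by
        rw [ha', hb', mul_mul_mul_comm (|u| ^ (α / 2)), ← Real.exp_add]
        ring_nf

end SpectralFunctional

section JointSAS

variable {α ε : ℝ} {S Ω : Type*} [MeasurableSpace S] {μ : Measure S} {f g : S → ℝ}
  [MeasurableSpace Ω] {P : Measure Ω} {ξ η : Ω → ℝ}

theorem JointSAS.symm (h : JointSAS α μ f g P ξ η) : JointSAS α μ g f P η ξ := fun u v => by
  simpa only [add_comm] using h v u

theorem JointSAS.charFunPair_map (h : JointSAS α μ f g P ξ η) (hξ : AEMeasurable ξ P)
    (hη : AEMeasurable η P) (t : ℝ × ℝ) :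
    charFunPair (P.map fun ω => (ξ ω, η ω)) t
      = rexp (-(nrm α μ (fun s => t.1 * f s + t.2 * g s) ^ α)) := by
  rw [charFunPair_apply, integral_map (hξ.prodMk hη) (by fun_prop), Complex.ofReal_exp,
    Complex.ofReal_neg, ← h t.1 t.2]
  simp only [Real.inner_apply, mul_comm]

theorem JointSAS.charFun_map_left (h : JointSAS α μ f g P ξ η) (hξ : AEMeasurable ξ P) (u : ℝ) :
    charFun (P.map ξ) u = rexp (-(nrm α μ (fun s => u * f s) ^ α)) := by
  rw [charFun_apply_real, integral_map hξ (by fun_prop)]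
  simpa [mul_comm] using h u 0

theorem JointSAS.norm_charFunPair_sub (h : JointSAS α μ f g P ξ η) (hξ : AEMeasurable ξ P)
    (hη : AEMeasurable η P) (t : ℝ × ℝ) :
    ‖charFunPair (P.map fun ω => (ξ ω, η ω)) t - charFun (P.map ξ) t.1 * charFun (P.map η) t.2‖
      = |Ufun α μ f g t.1 t.2| := by
  rw [h.charFunPair_map hξ hη, h.charFun_map_left hξ, h.symm.charFun_map_left hη,
    ← Complex.ofReal_mul, ← Complex.ofReal_sub, Complex.norm_real, Real.norm_eq_abs, Ufun,
    ← Real.exp_add, ← sub_eq_add_neg]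

theorem JointSAS.integrable_charFun_map_left (hα : 0 < α) (hf : 0 < nrm α μ f)
    (h : JointSAS α μ f g P ξ η) (hξ : AEMeasurable ξ P) : Integrable (charFun (P.map ξ)) := by
  have hw := (integrable_abs_rpow_mul_exp_neg_mul_abs_rpow (s := 0) (by norm_num) hα
    (Real.rpow_pos_of_pos hf α)).ofReal (𝕜 := ℂ)
  refine hw.congr (.of_forall fun u => ?_)
  simp only [h.charFun_map_left hξ, nrm_const_mul hα.ne',
    Real.mul_rpow (abs_nonneg u) (nrm_nonneg α μ f), Real.rpow_zero, one_mul, neg_mul]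
  rw [mul_comm]
  rfl

theorem JointSAS.integrable_charFunPair_map [IsFiniteMeasure P] (hα : 0 < α) (hε : 0 < ε)
    (hf : 0 < nrm α μ f) (hg : 0 < nrm α μ g) (hA : A2 α ε μ f g)
    (h : JointSAS α μ f g P ξ η) (hξ : AEMeasurable ξ P) (hη : AEMeasurable η P) :
    Integrable (charFunPair (P.map fun ω => (ξ ω, η ω))) := by
  have hw {b : ℝ} (hb : 0 < b) : Integrable fun x : ℝ => rexp (-(ε * b ^ α) * |x| ^ α) := by
    simpa using integrable_abs_rpow_mul_exp_neg_mul_abs_rpow (s := 0) (by norm_num) hα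
      (mul_pos hε (Real.rpow_pos_of_pos hb α))
  refine ((hw hf).mul_prod (hw hg)).mono' measurable_charFunPair.aestronglyMeasurable
    (.of_forall fun t => ?_)
  rw [h.charFunPair_map hξ hη, Complex.norm_real, Real.norm_of_nonneg (Real.exp_nonneg _),
    ← Real.exp_add]
  refine Real.exp_le_exp.2 ?_
  linarith [hA t.1 t.2]

/-- The constant of the covariance inequality: `2 / (2π)²` times the product of the integrals of
`|x| ^ (α / 2) * exp (-c * |x| ^ α)` for `c = ε * a ^ α` and `c = ε * b ^ α`, in closed form. -/
noncomputable def stableCovConst (α ε a b : ℝ) : ℝ :=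
  2 * (Gamma ((α / 2 + 1) / α) / (π * α)) ^ 2
    * ((ε * a ^ α) * (ε * b ^ α)) ^ (-(α / 2 + 1) / α)

theorem stableCovConst_pos {a b : ℝ} (hα : 0 < α) (hε : 0 < ε) (ha : 0 < a) (hb : 0 < b) :
    0 < stableCovConst α ε a b := by
  unfold stableCovConst
  positivity

theorem A2.integral_abs_Ufun_le (hα0 : 0 < α) (hα2 : α ≤ 2) (hε : 0 < ε) (hf : MemLalpha α μ f)
    (hg : MemLalpha α μ g) (hf0 : 0 < nrm α μ f) (hg0 : 0 < nrm α μ g) (h : A2 α ε μ f g) :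
    ∫ t : ℝ × ℝ, |Ufun α μ f g t.1 t.2|
      ≤ (2 * π) ^ 2 * stableCovConst α ε (nrm α μ f) (nrm α μ g) * dep2 α μ f g := by
  have hs : -1 < α / 2 := by linarith
  have ha : 0 < ε * nrm α μ f ^ α := by positivity
  have hb : 0 < ε * nrm α μ g ^ α := by positivity
  have hw {c : ℝ} (hc : 0 < c) := integrable_abs_rpow_mul_exp_neg_mul_abs_rpow hs hα0 hc
  have hle := integral_mono_of_nonneg (.of_forall fun _ => abs_nonneg _)
    (((hw ha).mul_prod (hw hb)).const_mul (2 * dep2 α μ f g))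
    (.of_forall fun t : ℝ × ℝ =>
      h.abs_Ufun_le hα0 hα2 (h.le_one hα0.ne' hf0) hf hg t.1 t.2)
  refine hle.trans_eq ?_
  rw [integral_const_mul,
    integral_prod_mul (fun u => |u| ^ (α / 2) * rexp (-(ε * nrm α μ f ^ α) * |u| ^ α))
      (fun v => |v| ^ (α / 2) * rexp (-(ε * nrm α μ g ^ α) * |v| ^ α)),
    integral_abs_rpow_mul_exp_neg_mul_abs_rpow hs hα0 ha,
    integral_abs_rpow_mul_exp_neg_mul_abs_rpow hs hα0 hb, stableCovConst,
    Real.mul_rpow ha.le hb.le]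
  field_simp

theorem stmt2_general [IsFiniteMeasure P] {K L : ℝ → ℝ} (hα0 : 0 < α) (hα2 : α ≤ 2) (hε : 0 < ε)
    (hf : MemLalpha α μ f) (hg : MemLalpha α μ g) (hf0 : 0 < nrm α μ f) (hg0 : 0 < nrm α μ g)
    (hA : A2 α ε μ f g) (h : JointSAS α μ f g P ξ η) (hξ : AEMeasurable ξ P)
    (hη : AEMeasurable η P) (hK : Integrable K) (hL : Integrable L) :
    Integrable (fun ω => K (ξ ω)) P ∧ Integrable (fun ω => L (η ω)) P ∧
      Integrable (fun ω => K (ξ ω) * L (η ω)) P ∧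
      |(∫ ω, K (ξ ω) * L (η ω) ∂P) - (∫ ω, K (ξ ω) ∂P) * (∫ ω, L (η ω) ∂P)|
        ≤ stableCovConst α ε (nrm α μ f) (nrm α μ g) * (∫ x, |K x|) * (∫ x, |L x|)
          * dep2 α μ f g := by
  have hφξ := h.integrable_charFun_map_left hα0 hf0 hξ
  have hφη := h.symm.integrable_charFun_map_left hα0 hg0 hη
  have hφ := h.integrable_charFunPair_map hα0 hε hf0 hg0 hA hξ hη
  have hKξ := integrable_of_integrable_charFun hφξ hK
  have hLη := integrable_of_integrable_charFun hφη hL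
  have hKL := integrable_of_integrable_charFunPair hφ (hK.mul_prod hL)
  refine ⟨hKξ.comp_aemeasurable hξ, hLη.comp_aemeasurable hη,
    hKL.comp_aemeasurable (hξ.prodMk hη), ?_⟩
  have hcov := abs_integral_mul_sub_le hφ hφξ hφη hK hL
  simp only [h.norm_charFunPair_sub hξ hη] at hcov
  rw [integral_map (hξ.prodMk hη) hKL.1, integral_map hξ hKξ.1, integral_map hη hLη.1] at hcov
  refine hcov.trans ?_
  calc ((2 * π) ^ Module.finrank ℝ (ℝ × ℝ))⁻¹ * (∫ t : ℝ × ℝ, |Ufun α μ f g t.1 t.2|)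
        * ((∫ x, |K x|) * ∫ x, |L x|)
      ≤ ((2 * π) ^ 2)⁻¹
        * ((2 * π) ^ 2 * stableCovConst α ε (nrm α μ f) (nrm α μ g) * dep2 α μ f g)
        * ((∫ x, |K x|) * ∫ x, |L x|) := by
        rw [Module.finrank_prod, Module.finrank_self]
        gcongr
        exact hA.integral_abs_Ufun_le hα0 hα2 hε hf hg hf0 hg0
    _ = _ := by
        field_simp

end JointSAS

/-- Paper's Theorem 2.1. -/
theorem stmt2 (α ε₁ nf ng : ℝ) (hα0 : 0 < α) (hα2 : α < 2) (hε₁ : 0 < ε₁)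
    (hnf : 0 < nf) (hng : 0 < ng) :
    ∃ C > (0:ℝ), ∀ (S : Type) [MeasurableSpace S] (μ : Measure S) [SigmaFinite μ]
      (f g : S → ℝ), MemLalpha α μ f → MemLalpha α μ g →
      nrm α μ f = nf → nrm α μ g = ng → A1 α ε₁ μ f g →
      ∀ (Ω : Type) [MeasurableSpace Ω] (P : Measure Ω) [IsProbabilityMeasure P]
        (ξ η : Ω → ℝ), Measurable ξ → Measurable η → JointSAS α μ f g P ξ η →
        ∀ K L : ℝ → ℝ, Integrable K volume → Integrable L volume →
          Integrable (fun ω => K (ξ ω)) P ∧ Integrable (fun ω => L (η ω)) P ∧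
          Integrable (fun ω => K (ξ ω) * L (η ω)) P ∧
          |(∫ ω, K (ξ ω) * L (η ω) ∂P) - (∫ ω, K (ξ ω) ∂P) * (∫ ω, L (η ω) ∂P)|
            ≤ C * (∫ x, |K x|) * (∫ x, |L x|) * dep2 α μ f g := by
  refine ⟨stableCovConst α ε₁ nf ng, stableCovConst_pos hα0 hε₁ hnf hng, ?_⟩
  rintro S _ μ _ f g hf hg rfl rfl hA Ω _ P _ ξ η hξ hη h K L hK hL
  exact stmt2_general hα0 hα2.le hε₁ hf hg hnf hng
    (hA.a2 hα0 hα2.le (hA.le_one hnf hng) hf hg) h hξ.aemeasurable hη.aemeasurable hK hL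
end
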